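/- Let 0 ≤ j ≤ k ≤ n be natural numbers and let ρ ∈ P_{1,2}^{j,k}(n). Let A ⊆ {1,…,n−k} be the set of left endpoints of the pairs of ρ and B ⊆ {n−k+1,…,n} the set of right endpoints, and let σ_ρ ∈ S_j be the permutation with σ_ρ(s) = t precisely when the s-th smallest element of A is paired in ρ with the t-th smallest element of B. Set ι(A) = #{(c,a) : c ∈ {1,…,n−k}∖A, a ∈ A, a < c}, ι(B) = #{(c,b) : c ∈ {n−k+1,…,n}∖B, b ∈ B, c < b}, and let inv(σ_ρ) be the number of inversions of σ_ρ. Then ι′(ρ) = ι(A) + ι(B) + inv(σ_ρ) + j(j−1)/2. -/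

import Mathlib

/-- A partition of `{1,…,n}` all of whose blocks are singletons or pairs, encoded as a
finite set of pairwise disjoint nonempty blocks covering `Finset.Icc 1 n`. -/
def IsP12 (n : ℕ) (ρ : Finset (Finset ℕ)) : Prop :=
  (ρ : Set (Finset ℕ)).PairwiseDisjoint id ∧
    ρ.sup id = Finset.Icc 1 n ∧ ∀ b ∈ ρ, b.card = 1 ∨ b.card = 2

/-- The recursive definition of the modified crossing number `ι′`, as a relation:
`ι′` of a partition with no pairs is `0`, and if `ρ'` is obtained from `ρ` by replacing the
singletons `{ℓ1}`, `{ℓ2}` (`ℓ1 < ℓ2`, `ℓ1` smaller than the left endpoint of every pair of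
`ρ`) by the pair `{ℓ1, ℓ2}`, then `ι′(ρ') = ι′(ρ) + #{singletons of ρ strictly between
ℓ1 and ℓ2} + 2·#{pairs of ρ nested inside (ℓ1, ℓ2)}`. -/
inductive Iota' : Finset (Finset ℕ) → ℕ → Prop
  | base (ρ : Finset (Finset ℕ)) (h : ∀ b ∈ ρ, b.card = 1) : Iota' ρ 0
  | step (ρ : Finset (Finset ℕ)) (v ℓ1 ℓ2 : ℕ)
      (h1 : ({ℓ1} : Finset ℕ) ∈ ρ) (h2 : ({ℓ2} : Finset ℕ) ∈ ρ) (hlt : ℓ1 < ℓ2)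
      (hmin : ∀ b ∈ ρ, b.card = 2 → ∀ x ∈ b, ℓ1 < x)
      (hv : Iota' ρ v) :
      Iota' (insert ({ℓ1, ℓ2} : Finset ℕ) ((ρ.erase {ℓ1}).erase {ℓ2}))
        (v + (ρ.filter fun b => b.card = 1 ∧ ∀ m ∈ b, ℓ1 < m ∧ m < ℓ2).card
           + 2 * (ρ.filter fun b => b.card = 2 ∧ ∀ x ∈ b, ℓ1 < x ∧ x < ℓ2).card)

/-!
Unfolding the recursion, every pair of `ρ` contributes one for each singleton it covers, one for
each pair crossing it from the right, and two for each pair nested inside it. When all pairs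
straddle a common cut `c`, a singleton left of `c` is covered by exactly the pairs whose left
endpoint precedes it, which gives `ι(A)`, and symmetrically on the right for `ι(B)`. Moreover any
two pairs either cross or are nested, so there are `j(j-1)/2` such couples in total, and the nested
ones, which are counted once more, are the inversions of `σ`.
-/

section

open Finset

section ProductCounts

variable {α β : Type*}

theorem card_filter_insert_product [DecidableEq α] (r : α × β → Prop) [DecidablePred r] {a : α}
    {s : Finset α} (ha : a ∉ s) (t : Finset β) :
    #{x ∈ insert a s ×ˢ t | r x} = #{y ∈ t | r (a, y)} + #{x ∈ s ×ˢ t | r x} := by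
  simp only [card_filter, sum_product, sum_insert ha]

theorem card_filter_product_insert [DecidableEq β] (r : α × β → Prop) [DecidablePred r] {b : β}
    (s : Finset α) {t : Finset β} (hb : b ∉ t) :
    #{x ∈ s ×ˢ insert b t | r x} = #{y ∈ s | r (y, b)} + #{x ∈ s ×ˢ t | r x} := by
  simp only [card_filter, sum_product, sum_insert hb, sum_add_distrib]

theorem card_filter_image_product_image {γ δ : Type*} [DecidableEq α] [DecidableEq β]
    (r : α × β → Prop) [DecidablePred r] {f : γ → α} {g : δ → β} {s : Finset γ}
    {t : Finset δ} (hf : Set.InjOn f s) (hg : Set.InjOn g t) :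
    #{x ∈ s.image f ×ˢ t.image g | r x} = #{x ∈ s ×ˢ t | r (f x.1, g x.2)} := by
  simp only [card_filter, sum_product, sum_image hf, sum_image hg]

end ProductCounts

/-- The number of couples of a point of `S` and an arc of `M` passing over it. An arc is encoded by
the couple of its left and right endpoints. -/
def coverings (S : Finset ℕ) (M : Finset (ℕ × ℕ)) : ℕ :=
  #{x ∈ S ×ˢ M | x.2.1 < x.1 ∧ x.1 < x.2.2}

/-- The number of couples of crossing arcs of `M`, the one starting first being listed first. -/
def crossings (M : Finset (ℕ × ℕ)) : ℕ :=
  #{x ∈ M ×ˢ M | x.1.1 < x.2.1 ∧ x.2.1 < x.1.2 ∧ x.1.2 < x.2.2}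

/-- The number of couples of nested arcs of `M`, the outer one being listed first. -/
def nestings (M : Finset (ℕ × ℕ)) : ℕ :=
  #{x ∈ M ×ˢ M | x.1.1 < x.2.1 ∧ x.2.2 < x.1.2}

section ArcCounts

variable {S : Finset ℕ} {M : Finset (ℕ × ℕ)}

theorem coverings_insert_left {m : ℕ} (hm : m ∉ S) :
    coverings (insert m S) M = #{P ∈ M | P.1 < m ∧ m < P.2} + coverings S M :=
  card_filter_insert_product _ hm M

theorem coverings_insert_right {L : ℕ × ℕ} (hL : L ∉ M) :
    coverings S (insert L M) = #{m ∈ S | L.1 < m ∧ m < L.2} + coverings S M :=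
  card_filter_product_insert _ S hL

theorem coverings_eq_filter_add_filter (p : ℕ → Prop) [DecidablePred p] :
    coverings S M = coverings {m ∈ S | p m} M + coverings {m ∈ S | ¬p m} M := by
  simp only [coverings, card_filter _ (_ ×ˢ _), sum_product]
  exact (sum_filter_add_sum_filter_not S p _).symm

theorem coverings_eq_of_forall_lt_snd (hfst : Set.InjOn Prod.fst (M : Set (ℕ × ℕ)))
    (hS : ∀ m ∈ S, ∀ P ∈ M, m < P.2) :
    coverings S M = #{x ∈ S ×ˢ M.image Prod.fst | x.2 < x.1} := by
  have h := card_filter_image_product_image (fun x : ℕ × ℕ => x.2 < x.1)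
    (Set.injOn_id (S : Set ℕ)) hfst
  rw [image_id] at h
  rw [h, coverings]
  refine congrArg card (filter_congr fun x hx => ?_)
  obtain ⟨hm, hP⟩ := mem_product.1 hx
  exact and_iff_left (hS _ hm _ hP)

theorem coverings_eq_of_forall_fst_lt (hsnd : Set.InjOn Prod.snd (M : Set (ℕ × ℕ)))
    (hS : ∀ m ∈ S, ∀ P ∈ M, P.1 < m) :
    coverings S M = #{x ∈ S ×ˢ M.image Prod.snd | x.1 < x.2} := by
  have h := card_filter_image_product_image (fun x : ℕ × ℕ => x.1 < x.2)
    (Set.injOn_id (S : Set ℕ)) hsnd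
  rw [image_id] at h
  rw [h, coverings]
  refine congrArg card (filter_congr fun x hx => ?_)
  obtain ⟨hm, hP⟩ := mem_product.1 hx
  exact and_iff_right (hS _ hm _ hP)

theorem crossings_insert_leftmost {L : ℕ × ℕ} (hL : ∀ P ∈ M, L.1 < P.1) :
    crossings (insert L M) = #{P ∈ M | P.1 < L.2 ∧ L.2 < P.2} + crossings M := by
  have hLM : L ∉ M := fun h => (hL L h).false
  have no_cross_from_right : #{P ∈ M | P.1 < L.1 ∧ L.1 < P.2 ∧ P.2 < L.2} = 0 :=
    card_filter_eq_zero_iff.2 fun P hP h => (hL P hP).asymm h.1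
  rw [crossings, card_filter_insert_product _ hLM, card_filter_product_insert _ _ hLM,
    no_cross_from_right, zero_add, filter_insert, if_neg fun h => h.1.false, crossings]
  congr 2
  exact filter_congr fun P hP => and_iff_right (hL P hP)

theorem nestings_insert_leftmost {L : ℕ × ℕ} (hL : ∀ P ∈ M, L.1 < P.1) :
    nestings (insert L M) = #{P ∈ M | P.2 < L.2} + nestings M := by
  have hLM : L ∉ M := fun h => (hL L h).false
  have not_nested_in : #{P ∈ M | P.1 < L.1 ∧ L.2 < P.2} = 0 :=
    card_filter_eq_zero_iff.2 fun P hP h => (hL P hP).asymm h.1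
  rw [nestings, card_filter_insert_product _ hLM, card_filter_product_insert _ _ hLM,
    not_nested_in, zero_add, filter_insert, if_neg fun h => h.1.false, nestings]
  congr 2
  exact filter_congr fun P hP => and_iff_right (hL P hP)

theorem crossings_add_nestings_eq_choose_two (hfst : Set.InjOn Prod.fst (M : Set (ℕ × ℕ)))
    (hsnd : Set.InjOn Prod.snd (M : Set (ℕ × ℕ))) (hM : ∀ P ∈ M, ∀ Q ∈ M, P.1 < Q.2) :
    crossings M + nestings M = (#M).choose 2 := by
  have count_lt : #{x ∈ M ×ˢ M | x.1.1 < x.2.1} = (#M).choose 2 := by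
    rw [← card_image_of_injOn hfst, ← card_product_filter_lt,
      card_filter_image_product_image _ hfst hfst]
  rw [← count_lt, ← card_filter_add_card_filter_not (fun x => x.1.2 < x.2.2), filter_filter,
    filter_filter, crossings, nestings]
  congr 2 <;> refine filter_congr fun ⟨P, Q⟩ hx => ?_ <;> obtain ⟨hP, hQ⟩ := mem_product.1 hx
  · exact and_congr_right fun _ => and_iff_right (hM Q hQ P hP)
  · refine and_congr_right fun hlt => ?_
    have hne : P.2 ≠ Q.2 := fun h => hlt.ne (congrArg Prod.fst (hsnd hP hQ h))
    rw [not_lt, le_iff_lt_or_eq, or_iff_left hne.symm]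

theorem nestings_image {ι κ : Type*} [Fintype ι] [LinearOrder ι] [LinearOrder κ] {a : ι → ℕ}
    {b : κ → ℕ} (ha : StrictMono a) (hb : StrictMono b) (σ : ι → κ) :
    nestings (univ.image fun s => (a s, b (σ s))) =
      #{x : ι × ι | x.1 < x.2 ∧ σ x.2 < σ x.1} := by
  have hinj : Set.InjOn (fun s => (a s, b (σ s))) (univ : Finset ι) :=
    fun s _ t _ h => ha.injective (congrArg Prod.fst h)
  simp only [nestings, card_filter_image_product_image _ hinj hinj, univ_product_univ,
    ha.lt_iff_lt, hb.lt_iff_lt]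

end ArcCounts

theorem pair_ne_singleton {α : Type*} [DecidableEq α] {a b : α} (hab : a ≠ b) (c : α) :
    ({a, b} : Finset α) ≠ {c} := fun h => by
  simpa [card_pair hab] using congrArg card h

theorem pair_eq_pair_iff_of_lt {α : Type*} [LinearOrder α] {a b c d : α} (hab : a < b)
    (hcd : c < d) : ({a, b} : Finset α) = {c, d} ↔ (a, b) = (c, d) := by
  refine ⟨fun h => ?_, by rintro ⟨⟩; rfl⟩
  rw [← coe_inj, coe_pair, coe_pair, Set.pair_eq_pair_iff] at h
  rcases h with ⟨rfl, rfl⟩ | ⟨rfl, rfl⟩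
  · rfl
  · exact absurd hab hcd.asymm

/-- The points forming a singleton block of `ρ`. -/
def singletonPoints (ρ : Finset (Finset ℕ)) : Finset ℕ :=
  {m ∈ ρ.sup id | {m} ∈ ρ}

/-- The two-element blocks of `ρ`, each encoded by the couple of its smaller and larger element. -/
def arcs (ρ : Finset (Finset ℕ)) : Finset (ℕ × ℕ) :=
  {P ∈ ρ.sup id ×ˢ ρ.sup id | P.1 < P.2 ∧ {P.1, P.2} ∈ ρ}

section Blocks

variable {ρ : Finset (Finset ℕ)}

theorem mem_singletonPoints {m : ℕ} : m ∈ singletonPoints ρ ↔ {m} ∈ ρ := by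
  simp only [singletonPoints, mem_filter, mem_sup, id, and_iff_right_iff_imp]
  exact fun h => ⟨_, h, mem_singleton_self m⟩

theorem mem_arcs {P : ℕ × ℕ} : P ∈ arcs ρ ↔ P.1 < P.2 ∧ {P.1, P.2} ∈ ρ := by
  simp only [arcs, mem_filter, mem_product, mem_sup, id, and_iff_right_iff_imp]
  exact fun h => ⟨⟨_, h.2, by simp⟩, ⟨_, h.2, by simp⟩⟩

theorem exists_arc_of_card_eq_two {b : Finset ℕ} (hb : b ∈ ρ) (hcard : #b = 2) :
    ∃ P ∈ arcs ρ, b = {P.1, P.2} := by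
  obtain ⟨x, y, hxy, rfl⟩ := card_eq_two.1 hcard
  rcases hxy.lt_or_gt with h | h
  · exact ⟨(x, y), mem_arcs.2 ⟨h, hb⟩, rfl⟩
  · exact ⟨(y, x), mem_arcs.2 ⟨h, pair_comm x y ▸ hb⟩, pair_comm x y⟩

theorem card_filter_singleton_blocks (p : ℕ → Prop) [DecidablePred p] :
    #{b ∈ ρ | #b = 1 ∧ ∀ m ∈ b, p m} = #{m ∈ singletonPoints ρ | p m} := by
  rw [← card_image_of_injective {m ∈ singletonPoints ρ | p m} singleton_injective]
  congr 1
  ext b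
  simp only [mem_filter, mem_image, mem_singletonPoints, card_eq_one]
  constructor
  · rintro ⟨hb, ⟨m, rfl⟩, hp⟩
    exact ⟨m, ⟨hb, hp m (mem_singleton_self m)⟩, rfl⟩
  · rintro ⟨m, ⟨hb, hp⟩, rfl⟩
    exact ⟨hb, ⟨m, rfl⟩, by simpa using hp⟩

theorem injOn_pair_arcs :
    Set.InjOn (fun P : ℕ × ℕ => ({P.1, P.2} : Finset ℕ)) (arcs ρ : Set (ℕ × ℕ)) :=
  fun _ hP _ hQ h => (pair_eq_pair_iff_of_lt (mem_arcs.1 hP).1 (mem_arcs.1 hQ).1).1 h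

theorem card_filter_pair_blocks (p : ℕ → Prop) [DecidablePred p] :
    #{b ∈ ρ | #b = 2 ∧ ∀ x ∈ b, p x} = #{P ∈ arcs ρ | p P.1 ∧ p P.2} := by
  rw [← card_image_of_injOn (injOn_pair_arcs.mono (coe_subset.2 (filter_subset _ _)))]
  congr 1
  ext b
  simp only [mem_filter, mem_image]
  constructor
  · rintro ⟨hb, hcard, hp⟩
    obtain ⟨P, hP, rfl⟩ := exists_arc_of_card_eq_two hb hcard
    exact ⟨P, ⟨hP, hp _ (by simp), hp _ (by simp)⟩, rfl⟩
  · rintro ⟨P, ⟨hP, hp⟩, rfl⟩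
    obtain ⟨hlt, hb⟩ := mem_arcs.1 hP
    exact ⟨hb, card_pair hlt.ne, by simpa using hp⟩

theorem singletonPoints_insert_pair {a b : ℕ} (hab : a ≠ b) :
    singletonPoints (insert {a, b} ((ρ.erase {a}).erase {b})) =
      ((singletonPoints ρ).erase a).erase b := by
  ext m
  simp only [mem_singletonPoints, mem_insert, mem_erase, (pair_ne_singleton hab m).symm, false_or,
    ne_eq, singleton_inj]

theorem arcs_insert_pair {a b : ℕ} (hab : a < b) :
    arcs (insert {a, b} ((ρ.erase {a}).erase {b})) = insert (a, b) (arcs ρ) := by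
  ext ⟨x, y⟩
  simp only [mem_arcs, mem_insert, mem_erase]
  constructor
  · rintro ⟨hxy, h | h⟩
    · exact Or.inl ((pair_eq_pair_iff_of_lt hxy hab).1 h)
    · exact Or.inr ⟨hxy, h.2.2⟩
  · rintro (h | ⟨hxy, h⟩)
    · obtain ⟨rfl, rfl⟩ := Prod.mk.inj h
      exact ⟨hab, Or.inl rfl⟩
    · exact ⟨hxy, Or.inr ⟨pair_ne_singleton hxy.ne b, pair_ne_singleton hxy.ne a, h⟩⟩

end Blocks

theorem coverings_insert_leftmost_add {S : Finset ℕ} {M : Finset (ℕ × ℕ)} {a b : ℕ}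
    (ha : a ∈ S) (hb : b ∈ S) (hab : a < b) (hleft : ∀ P ∈ M, a < P.1) :
    coverings ((S.erase a).erase b) (insert (a, b) M) + #{P ∈ M | P.1 < b ∧ b < P.2} =
      coverings S M + #{m ∈ S | a < m ∧ m < b} := by
  have not_covered : #{P ∈ M | P.1 < a ∧ a < P.2} = 0 :=
    card_filter_eq_zero_iff.2 fun P hP h => (hleft P hP).asymm h.1
  have hbS : b ∈ S.erase a := mem_erase.2 ⟨hab.ne', hb⟩
  have between : {m ∈ (S.erase a).erase b | a < m ∧ m < b} = {m ∈ S | a < m ∧ m < b} := by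
    ext m
    simp only [mem_filter, mem_erase]
    grind
  have split : coverings S M =
      #{P ∈ M | P.1 < b ∧ b < P.2} + coverings ((S.erase a).erase b) M := by
    conv_lhs => rw [← insert_erase ha, coverings_insert_left (notMem_erase a S), not_covered,
      zero_add, ← insert_erase hbS, coverings_insert_left (notMem_erase b _)]
  rw [coverings_insert_right fun h => (hleft _ h).false, between, split]
  ring

theorem Iota'.eq_coverings_add_crossings_add_nestings {ρ : Finset (Finset ℕ)} {v : ℕ}
    (hv : Iota' ρ v) :
    v = coverings (singletonPoints ρ) (arcs ρ) + crossings (arcs ρ) + 2 * nestings (arcs ρ) := by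
  induction hv with
  | base ρ h =>
    have no_arcs : arcs ρ = ∅ := eq_empty_of_forall_notMem fun P hP => by
      obtain ⟨hlt, hmem⟩ := mem_arcs.1 hP
      simpa [card_pair hlt.ne] using h _ hmem
    simp [no_arcs, coverings, crossings, nestings]
  | step ρ v a b ha hb hab hmin _ ih =>
    have hleft : ∀ P ∈ arcs ρ, a < P.1 := fun P hP => by
      obtain ⟨hlt, hmem⟩ := mem_arcs.1 hP
      exact hmin _ hmem (card_pair hlt.ne) _ (mem_insert_self _ _)
    have nested : #{P ∈ arcs ρ | (a < P.1 ∧ P.1 < b) ∧ a < P.2 ∧ P.2 < b} =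
        #{P ∈ arcs ρ | P.2 < b} := by
      refine congrArg card (filter_congr fun P hP => ?_)
      have := hleft P hP
      have := (mem_arcs.1 hP).1
      omega
    have hcov := coverings_insert_leftmost_add (mem_singletonPoints.2 ha)
      (mem_singletonPoints.2 hb) hab hleft
    rw [card_filter_singleton_blocks, card_filter_pair_blocks, nested,
      singletonPoints_insert_pair hab.ne, arcs_insert_pair hab, crossings_insert_leftmost hleft,
      nestings_insert_leftmost hleft]
    dsimp only
    omega

namespace IsP12

variable {n c : ℕ} {ρ : Finset (Finset ℕ)}

theorem mem_Icc_of_mem (hρ : IsP12 n ρ) {b : Finset ℕ} (hb : b ∈ ρ) {x : ℕ} (hx : x ∈ b) :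
    x ∈ Icc 1 n :=
  hρ.2.1 ▸ mem_sup.2 ⟨b, hb, hx⟩

theorem eq_of_mem_of_mem (hρ : IsP12 n ρ) {b b' : Finset ℕ} (hb : b ∈ ρ) (hb' : b' ∈ ρ) {x : ℕ}
    (hx : x ∈ b) (hx' : x ∈ b') : b = b' :=
  hρ.1.elim_finset hb hb' x hx hx'

theorem injOn_fst_arcs (hρ : IsP12 n ρ) : Set.InjOn Prod.fst (arcs ρ : Set (ℕ × ℕ)) := by
  intro P hP Q hQ h
  exact injOn_pair_arcs hP hQ (hρ.eq_of_mem_of_mem (mem_arcs.1 hP).2 (mem_arcs.1 hQ).2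
    (x := P.1) (by simp) (by simp [h]))

theorem injOn_snd_arcs (hρ : IsP12 n ρ) : Set.InjOn Prod.snd (arcs ρ : Set (ℕ × ℕ)) := by
  intro P hP Q hQ h
  exact injOn_pair_arcs hP hQ (hρ.eq_of_mem_of_mem (mem_arcs.1 hP).2 (mem_arcs.1 hQ).2
    (x := P.2) (by simp) (by simp [h]))

theorem image_fst_arcs (hρ : IsP12 n ρ) :
    (arcs ρ).image Prod.fst =
      {a ∈ Icc 1 n | ∃ b ∈ ρ, #b = 2 ∧ a ∈ b ∧ ∀ x ∈ b, a ≤ x} := by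
  ext a
  simp only [mem_image, mem_filter]
  constructor
  · rintro ⟨P, hP, rfl⟩
    obtain ⟨hlt, hb⟩ := mem_arcs.1 hP
    exact ⟨hρ.mem_Icc_of_mem hb (by simp), _, hb, card_pair hlt.ne, by simp, by simp [hlt.le]⟩
  · rintro ⟨-, b, hb, hcard, hab, hmin⟩
    obtain ⟨P, hP, rfl⟩ := exists_arc_of_card_eq_two hb hcard
    have hlt := (mem_arcs.1 hP).1
    have hle := hmin P.1 (by simp)
    simp only [mem_insert, mem_singleton] at hab
    exact ⟨P, hP, by omega⟩

theorem image_snd_arcs (hρ : IsP12 n ρ) :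
    (arcs ρ).image Prod.snd =
      {a ∈ Icc 1 n | ∃ b ∈ ρ, #b = 2 ∧ a ∈ b ∧ ∀ x ∈ b, x ≤ a} := by
  ext a
  simp only [mem_image, mem_filter]
  constructor
  · rintro ⟨P, hP, rfl⟩
    obtain ⟨hlt, hb⟩ := mem_arcs.1 hP
    exact ⟨hρ.mem_Icc_of_mem hb (by simp), _, hb, card_pair hlt.ne, by simp, by simp [hlt.le]⟩
  · rintro ⟨-, b, hb, hcard, hab, hmax⟩
    obtain ⟨P, hP, rfl⟩ := exists_arc_of_card_eq_two hb hcard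
    have hlt := (mem_arcs.1 hP).1
    have hle := hmax P.2 (by simp)
    simp only [mem_insert, mem_singleton] at hab
    exact ⟨P, hP, by omega⟩

theorem singletonPoints_eq (hρ : IsP12 n ρ) :
    singletonPoints ρ = Icc 1 n \ ((arcs ρ).image Prod.fst ∪ (arcs ρ).image Prod.snd) := by
  ext m
  simp only [mem_singletonPoints, mem_sdiff, mem_union, mem_image]
  constructor
  · refine fun hm => ⟨hρ.mem_Icc_of_mem hm (mem_singleton_self m), ?_⟩
    have not_endpoint : ∀ P ∈ arcs ρ, m ∉ ({P.1, P.2} : Finset ℕ) := fun P hP hmP => by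
      obtain ⟨hlt, hb⟩ := mem_arcs.1 hP
      exact pair_ne_singleton hlt.ne m
        (hρ.eq_of_mem_of_mem hb hm hmP (mem_singleton_self m))
    rintro (⟨P, hP, rfl⟩ | ⟨P, hP, rfl⟩) <;> exact not_endpoint P hP (by simp)
  · rintro ⟨hm, hend⟩
    obtain ⟨b, hb, hmb⟩ := mem_sup.1 (hρ.2.1.symm ▸ hm)
    rcases hρ.2.2 b hb with hcard | hcard
    · obtain ⟨x, rfl⟩ := card_eq_one.1 hcard
      rwa [mem_singleton.1 hmb]
    · obtain ⟨P, hP, rfl⟩ := exists_arc_of_card_eq_two hb hcard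
      rcases mem_insert.1 hmb with h | h
      · exact absurd (Or.inl ⟨P, hP, h.symm⟩) hend
      · exact absurd (Or.inr ⟨P, hP, (mem_singleton.1 h).symm⟩) hend

theorem singletonPoints_filter_le (hρ : IsP12 n ρ) (hc : c ≤ n) (hcut : ∀ P ∈ arcs ρ, c < P.2) :
    {m ∈ singletonPoints ρ | m ≤ c} = Icc 1 c \ (arcs ρ).image Prod.fst := by
  ext m
  have hsnd : m ≤ c → m ∉ (arcs ρ).image Prod.snd := fun hm h => by
    obtain ⟨P, hP, rfl⟩ := mem_image.1 h
    exact (hcut P hP).not_ge hm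
  simp only [hρ.singletonPoints_eq, mem_filter, mem_sdiff, mem_union, mem_Icc]
  grind

theorem singletonPoints_filter_not_le (hρ : IsP12 n ρ) (hcut : ∀ P ∈ arcs ρ, P.1 ≤ c) :
    {m ∈ singletonPoints ρ | ¬m ≤ c} = Icc (c + 1) n \ (arcs ρ).image Prod.snd := by
  ext m
  have hfst : ¬m ≤ c → m ∉ (arcs ρ).image Prod.fst := fun hm h => by
    obtain ⟨P, hP, rfl⟩ := mem_image.1 h
    exact hm (hcut P hP)
  simp only [hρ.singletonPoints_eq, mem_filter, mem_sdiff, mem_union, mem_Icc]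
  grind

theorem coverings_eq_of_straddle (hρ : IsP12 n ρ) (hc : c ≤ n)
    (hcut : ∀ P ∈ arcs ρ, P.1 ≤ c ∧ c < P.2) :
    coverings (singletonPoints ρ) (arcs ρ) =
      #{x ∈ (Icc 1 c \ (arcs ρ).image Prod.fst) ×ˢ (arcs ρ).image Prod.fst | x.2 < x.1} +
      #{x ∈ (Icc (c + 1) n \ (arcs ρ).image Prod.snd) ×ˢ (arcs ρ).image Prod.snd | x.1 < x.2} := by
  rw [coverings_eq_filter_add_filter (· ≤ c),
    coverings_eq_of_forall_lt_snd hρ.injOn_fst_arcs fun m hm P hP =>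
      (mem_filter.1 hm).2.trans_lt (hcut P hP).2,
    coverings_eq_of_forall_fst_lt hρ.injOn_snd_arcs fun m hm P hP =>
      (hcut P hP).1.trans_lt (not_le.1 (mem_filter.1 hm).2),
    hρ.singletonPoints_filter_le hc fun P hP => (hcut P hP).2,
    hρ.singletonPoints_filter_not_le fun P hP => (hcut P hP).1]

end IsP12

theorem arcs_eq_image {ρ : Finset (Finset ℕ)} {ι κ : Type*} [Fintype ι] {a : ι → ℕ} {b : κ → ℕ}
    (ha : Set.range a = (arcs ρ).image Prod.fst) (hb : Set.range b = (arcs ρ).image Prod.snd)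
    (hlt : ∀ P ∈ arcs ρ, ∀ Q ∈ arcs ρ, P.1 < Q.2) {σ : ι → κ}
    (hσ : ∀ s t, σ s = t ↔ {a s, b t} ∈ ρ) :
    arcs ρ = univ.image fun s => (a s, b (σ s)) := by
  ext P
  simp only [mem_image, mem_univ, true_and]
  constructor
  · intro hP
    obtain ⟨s, hs⟩ : P.1 ∈ Set.range a := ha ▸ mem_image_of_mem _ hP
    obtain ⟨t, ht⟩ : P.2 ∈ Set.range b := hb ▸ mem_image_of_mem _ hP
    have hst : σ s = t := (hσ s t).2 (by rw [hs, ht]; exact (mem_arcs.1 hP).2)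
    exact ⟨s, by rw [hst, hs, ht]⟩
  · rintro ⟨s, rfl⟩
    obtain ⟨P, hP, hPs⟩ := mem_image.1 (ha ▸ Set.mem_range_self s :)
    obtain ⟨Q, hQ, hQs⟩ := mem_image.1 (hb ▸ Set.mem_range_self (σ s) :)
    exact mem_arcs.2 ⟨hPs ▸ hQs ▸ hlt P hP Q hQ, (hσ s _).1 rfl⟩

theorem nestings_arcs_eq_card_inversions {ρ : Finset (Finset ℕ)} {i j : ℕ}
    (hfst : #((arcs ρ).image Prod.fst) = i) (hsnd : #((arcs ρ).image Prod.snd) = j)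
    (hlt : ∀ P ∈ arcs ρ, ∀ Q ∈ arcs ρ, P.1 < Q.2) {σ : Fin i → Fin j}
    (hσ : ∀ s t, σ s = t ↔ {orderEmbOfFin _ hfst s, orderEmbOfFin _ hsnd t} ∈ ρ) :
    nestings (arcs ρ) = #{x : Fin i × Fin i | x.1 < x.2 ∧ σ x.2 < σ x.1} := by
  rw [arcs_eq_image (range_orderEmbOfFin _ hfst) (range_orderEmbOfFin _ hsnd) hlt hσ]
  exact nestings_image (orderEmbOfFin _ hfst).strictMono (orderEmbOfFin _ hsnd).strictMono σ

end

/-- The identity from Lemma 3.8: for `ρ ∈ P_{1,2}^{j,k}(n)` with set of left endpoints `A`,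
set of right endpoints `B`, and pairing permutation `σ`,
`ι′(ρ) = ι(A) + ι(B) + inv(σ) + j(j−1)/2`. -/
theorem stmt9 (n k j : ℕ) (hjk : j ≤ k) (hkn : k ≤ n)
    (ρ : Finset (Finset ℕ)) (hρ : IsP12 n ρ)
    (hstraddle : ∀ b ∈ ρ, b.card = 2 → ∀ i ∈ b, ∀ l ∈ b, i < l → i ≤ n - k ∧ n - k + 1 ≤ l)
    (hpairs : (ρ.filter fun b => b.card = 2).card = j)
    (A B : Finset ℕ)
    (hA : A = (Finset.Icc 1 n).filter fun a =>
      ∃ b ∈ ρ, b.card = 2 ∧ a ∈ b ∧ ∀ x ∈ b, a ≤ x)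
    (hB : B = (Finset.Icc 1 n).filter fun a =>
      ∃ b ∈ ρ, b.card = 2 ∧ a ∈ b ∧ ∀ x ∈ b, x ≤ a)
    (hAcard : A.card = j) (hBcard : B.card = j)
    (σ : Equiv.Perm (Fin j))
    (hσ : ∀ s t : Fin j, σ s = t ↔
      ({(A.orderIsoOfFin hAcard s : ℕ), (B.orderIsoOfFin hBcard t : ℕ)} : Finset ℕ) ∈ ρ)
    (v : ℕ) (hv : Iota' ρ v) :
    v = (((Finset.Icc 1 (n - k) \ A) ×ˢ A).filter fun p => p.2 < p.1).card
      + (((Finset.Icc (n - k + 1) n \ B) ×ˢ B).filter fun p => p.1 < p.2).card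
      + ((Finset.univ : Finset (Fin j × Fin j)).filter fun p =>
          p.1 < p.2 ∧ σ p.2 < σ p.1).card
      + j * (j - 1) / 2 := by
  have hcut : ∀ P ∈ arcs ρ, P.1 ≤ n - k ∧ n - k < P.2 := fun P hP => by
    obtain ⟨hlt, hb⟩ := mem_arcs.1 hP
    exact hstraddle _ hb (Finset.card_pair hlt.ne) _ (by simp) _ (by simp) hlt
  have hlt : ∀ P ∈ arcs ρ, ∀ Q ∈ arcs ρ, P.1 < Q.2 := fun P hP Q hQ =>
    (hcut P hP).1.trans_lt (hcut Q hQ).2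
  rw [← hρ.image_fst_arcs] at hA
  rw [← hρ.image_snd_arcs] at hB
  subst hA hB
  have card_arcs : (arcs ρ).card = j :=
    (Finset.card_image_of_injOn hρ.injOn_fst_arcs).symm.trans hAcard
  rw [hv.eq_coverings_add_crossings_add_nestings,
    hρ.coverings_eq_of_straddle (Nat.sub_le n k) hcut,
    ← nestings_arcs_eq_card_inversions hAcard hBcard hlt hσ, ← Nat.choose_two_right, ← card_arcs,
    ← crossings_add_nestings_eq_choose_two hρ.injOn_fst_arcs hρ.injOn_snd_arcs hlt]
  ring
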